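/- Let A be a finite type of odd cardinality and let n ≥ 4. Then the full symmetric group of (Fin n → A) equals the subgroup of Perm(Fin n → A) generated by the applications, along injections ι : Fin 4 ↪ Fin n, of arbitrary permutations of (Fin 4 → A). In words: for odd |A|, the permutations of A⁴ generate all permutations of Aⁿ for all n ≥ 4. -/

import Mathlib

/-- Extension of an operation on `m`-letter words to `n`-letter words along an
injection of coordinates: apply `F` on the coordinates selected by `ι`, leave
the rest unchanged. -/
noncomputable def extWord {A : Type*} {m n : ℕ} (ι : Fin m ↪ Fin n)
    (F : (Fin m → A) → (Fin m → A)) (x : Fin n → A) : Fin n → A :=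
  fun k => if h : ∃ j, ι j = k then F (x ∘ ι) h.choose else x k

theorem extWord_comp {A : Type*} {m n : ℕ} (ι : Fin m ↪ Fin n)
    (F : (Fin m → A) → (Fin m → A)) (x : Fin n → A) :
    (extWord ι F x) ∘ ι = F (x ∘ ι) := by
  funext j
  have h : ∃ j', ι j' = ι j := ⟨j, rfl⟩
  simp only [Function.comp_apply, extWord, dif_pos h]
  congr 1
  exact ι.injective h.choose_spec

/-- The application of a gate `f` of arity `m` along an injection `ι : Fin m ↪ Fin n`:
the resulting permutation `g` of words of length `n` satisfies
`(g x) (ι j) = (f (x ∘ ι)) j` for all `j : Fin m`, and `g x k = x k` for every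
coordinate `k` outside the range of `ι`. -/
noncomputable def applyAlong {A : Type*} {m n : ℕ} (f : Equiv.Perm (Fin m → A))
    (ι : Fin m ↪ Fin n) : Equiv.Perm (Fin n → A) where
  toFun := extWord ι f
  invFun := extWord ι f.symm
  left_inv x := by
    funext k
    by_cases h : ∃ j, ι j = k
    · obtain ⟨j, rfl⟩ := h
      have hj : extWord ι (⇑f.symm) (extWord ι (⇑f) x) (ι j)
          = ((extWord ι (⇑f.symm) (extWord ι (⇑f) x)) ∘ ι) j := rfl
      rw [hj, extWord_comp, extWord_comp]
      simp
    · simp only [extWord, dif_neg h]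
  right_inv x := by
    funext k
    by_cases h : ∃ j, ι j = k
    · obtain ⟨j, rfl⟩ := h
      have hj : extWord ι (⇑f) (extWord ι (⇑f.symm) x) (ι j)
          = ((extWord ι (⇑f) (extWord ι (⇑f.symm) x)) ∘ ι) j := rfl
      rw [hj, extWord_comp, extWord_comp]
      simp
    · simp only [extWord, dif_neg h]

/-!
Split a word of length `n + 1` into its first letter, its middle block and its last letter. The
gates on the first `n` letters and those on the last `n` letters overlap in the middle block.
Together they act 2-transitively, and the commutator of two such gates whose supports meet in a
single word is a 3-cycle, so by Jordan's theorem they generate all even permutations. A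
transposition of the last `n` letters, acting on the whole word, is a product of `|A|` disjoint
transpositions, hence odd when `|A|` is odd. So gates of arity `n` generate everything in arity
`n + 1`, and one climbs from any arity `m ≥ 2` to every `n ≥ m`.
-/

open Equiv
open scoped commutatorElement

section Perm

variable {X : Type*} [Fintype X] [DecidableEq X]

theorem isThreeCycle_commutatorElement_of_support_inter_eq_singleton {σ τ : Perm X} {p : X}
    (h : σ.support ∩ τ.support = {p}) : ⁅σ, τ⁆.IsThreeCycle := by
  have mem_iff (x : X) : σ x ≠ x ∧ τ x ≠ x ↔ x = p := by
    simpa only [Finset.mem_inter, Perm.mem_support, Finset.mem_singleton] using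
      Finset.ext_iff.mp h x
  obtain ⟨hσp, hτp⟩ := (mem_iff p).mpr rfl
  have hτσ : τ (σ p) = σ p := by
    by_contra hne
    exact hσp ((mem_iff (σ p)).mp ⟨σ.injective.ne hσp, hne⟩)
  have hne : τ p ≠ σ p := fun heq => hσp (τ.injective (hτσ.trans heq.symm))
  -- Removing `p` from the cycle of `σ` leaves a permutation that commutes with `τ`.
  have hcomm : Commute (swap p (σ p) * σ) τ := by
    refine Perm.Disjoint.commute fun x => ?_
    have hx := mem_iff x
    by_cases hxp : x = p
    · simp [hxp]
    · grind [Perm.mul_apply]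
  have hprod : ⁅σ, τ⁆ = swap p (σ p) * swap (τ p) (σ p) := by
    calc ⁅σ, τ⁆ = swap p (σ p) * ((swap p (σ p) * σ) * τ) * σ⁻¹ * τ⁻¹ := by
          simp [commutatorElement_def, ← mul_assoc]
      _ = swap p (σ p) * (τ * swap p (σ p) * τ⁻¹) := by rw [hcomm.eq]; group
      _ = swap p (σ p) * swap (τ p) (σ p) := by rw [← swap_apply_apply, hτσ]
  rw [hprod, swap_comm p, swap_comm (τ p)]
  exact Perm.isThreeCycle_swap_mul_swap_same hσp hne.symm hτp.symm

theorem eq_top_of_alternatingGroup_le_of_sign_eq_neg_one {H : Subgroup (Perm X)}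
    (hH : alternatingGroup X ≤ H) {σ : Perm X} (hσ : σ ∈ H) (hsign : Perm.sign σ = -1) :
    H = ⊤ := by
  refine (Subgroup.eq_top_iff' H).mpr fun g => ?_
  rcases Int.units_eq_one_or (Perm.sign g) with hg | hg
  · exact hH (Perm.mem_alternatingGroup.mpr hg)
  · have hgσ : g * σ ∈ H := hH (Perm.mem_alternatingGroup.mpr (by simp [hg, hsign]))
    exact (H.mul_mem_cancel_right hσ).mp hgσ

end Perm

section Overlap

variable {A B C : Type*}

/-- The permutation of triples that applies `f` to the first two components: the abstract form of
a gate acting on all letters of a word but the last. -/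
def actLeft (B : Type*) (f : Perm (A × C)) : Perm (A × C × B) :=
  (prodAssoc A C B).permCongr (f.prodCongr (Equiv.refl B))

/-- The permutation of triples that applies `g` to the last two components: the abstract form of
a gate acting on all letters of a word but the first. -/
def actRight (A : Type*) (g : Perm (C × B)) : Perm (A × C × B) :=
  prodCongrRight fun _ => g

@[simp]
theorem actLeft_apply (f : Perm (A × C)) (a : A) (c : C) (b : B) :
    actLeft B f (a, c, b) = ((f (a, c)).1, (f (a, c)).2, b) :=
  rfl

@[simp]
theorem actRight_apply (g : Perm (C × B)) (a : A) (c : C) (b : B) :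
    actRight A g (a, c, b) = (a, g (c, b)) :=
  rfl

theorem sign_actRight [Fintype A] [DecidableEq A] [Fintype B] [DecidableEq B] [Fintype C]
    [DecidableEq C] (g : Perm (C × B)) :
    Perm.sign (actRight A g) = Perm.sign g ^ Fintype.card A := by
  simp [actRight, Perm.sign_prodCongrRight]

theorem isThreeCycle_commutatorElement_actLeft_actRight [Fintype A] [DecidableEq A] [Fintype B]
    [DecidableEq B] [Fintype C] [DecidableEq C] (a : A) (b : B) {c c₁ c₂ : C}
    (h₁ : c ≠ c₁) (h₂ : c ≠ c₂) (h₁₂ : c₁ ≠ c₂) :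
    ⁅actLeft B (swap (a, c) (a, c₁)), actRight A (swap (c, b) (c₂, b))⁆.IsThreeCycle := by
  apply isThreeCycle_commutatorElement_of_support_inter_eq_singleton (p := (a, c, b))
  ext ⟨x, z, y⟩
  have hleft : actLeft B (swap (a, c) (a, c₁)) (x, z, y) ≠ (x, z, y) ↔
      x = a ∧ (z = c ∨ z = c₁) := by
    have := swap_apply_ne_self_iff (a := (a, c)) (b := (a, c₁)) (x := (x, z))
    grind [actLeft_apply]
  have hright : actRight A (swap (c, b) (c₂, b)) (x, z, y) ≠ (x, z, y) ↔
      y = b ∧ (z = c ∨ z = c₂) := by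
    have := swap_apply_ne_self_iff (a := (c, b)) (b := (c₂, b)) (x := (z, y))
    grind [actRight_apply]
  rw [Finset.mem_inter, Perm.mem_support, Perm.mem_support, hleft, hright, Finset.mem_singleton]
  grind

variable {H : Subgroup (Perm (A × C × B))} (hL : ∀ f, actLeft B f ∈ H)
  (hR : ∀ g, actRight A g ∈ H)

include hL hR

theorem exists_mem_apply_eq (x y : A × C × B) : ∃ h ∈ H, h x = y := by
  classical
  obtain ⟨⟨a, c, b⟩, ⟨a', c', b'⟩⟩ := x, y
  exact ⟨actRight A (swap (c', b) (c', b')) * actLeft B (swap (a, c) (a', c')),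
    H.mul_mem (hR _) (hL _), by simp⟩

theorem exists_mem_apply_eq_self_and_apply_eq {a : A} {c d : C} {b : B} (hd : d ≠ c)
    {y : A × C × B} (hy : y ≠ (a, c, b)) :
    ∃ h ∈ H, h (a, c, b) = (a, c, b) ∧ h y = (a, d, b) := by
  classical
  obtain ⟨a', c', b'⟩ := y
  have hleft : (a, c) ≠ (a, d) := by simp [hd.symm]
  have hright : (c, b) ≠ (d, b) := by simp [hd.symm]
  by_cases hac : (a', c') = (a, c)
  · obtain ⟨rfl, rfl⟩ := Prod.mk.inj hac
    have hcb : (c', b) ≠ (c', b') := by grind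
    exact ⟨actRight A (swap (c', b') (d, b)), hR _, by
      simp [swap_apply_of_ne_of_ne hcb hright], by simp⟩
  · have hdb : (c, b) ≠ (d, b') := by simp [hd.symm]
    refine ⟨actRight A (swap (d, b') (d, b)) * actLeft B (swap (a', c') (a, d)),
      H.mul_mem (hR _) (hL _), ?_, by simp⟩
    simp [swap_apply_of_ne_of_ne (Ne.symm hac) hleft, swap_apply_of_ne_of_ne hdb hright]

theorem isMultiplyPretransitive_two_of_actLeft_mem_of_actRight_mem [Nontrivial C] :
    MulAction.IsMultiplyPretransitive H (A × C × B) 2 := by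
  refine MulAction.is_two_pretransitive_iff.mpr fun {x y z w} hxy hzw => ?_
  obtain ⟨g, hg, hgx⟩ := exists_mem_apply_eq hL hR x z
  have hgy : g y ≠ z := hgx ▸ g.injective.ne hxy.symm
  obtain ⟨a, c, b⟩ := z
  obtain ⟨d, hd⟩ := exists_ne c
  obtain ⟨h₁, hh₁, h₁z, h₁y⟩ := exists_mem_apply_eq_self_and_apply_eq hL hR hd hgy
  obtain ⟨h₂, hh₂, h₂z, h₂w⟩ := exists_mem_apply_eq_self_and_apply_eq hL hR hd hzw.symm
  refine ⟨⟨h₂⁻¹ * h₁ * g, H.mul_mem (H.mul_mem (H.inv_mem hh₂) hh₁) hg⟩, ?_, ?_⟩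
  · simp [Subgroup.smul_def, hgx, h₁z, symm_apply_eq, h₂z]
  · simp [Subgroup.smul_def, h₁y, symm_apply_eq, h₂w]

theorem alternatingGroup_le_of_actLeft_mem_of_actRight_mem [Fintype A] [DecidableEq A]
    [Nonempty A] [Fintype B] [DecidableEq B] [Nonempty B] [Fintype C] [DecidableEq C]
    (hC : 2 < Fintype.card C) : alternatingGroup (A × C × B) ≤ H := by
  obtain ⟨c, c₁, c₂, h₁, h₂, h₁₂⟩ := Fintype.two_lt_card_iff.mp hC
  have : Nontrivial C := ⟨c, c₁, h₁⟩
  obtain ⟨⟨a⟩, ⟨b⟩⟩ := ‹Nonempty A›, ‹Nonempty B›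
  have hprim : MulAction.IsPreprimitive H (A × C × B) :=
    MulAction.isPreprimitive_of_is_two_pretransitive
      (isMultiplyPretransitive_two_of_actLeft_mem_of_actRight_mem hL hR)
  exact Perm.alternatingGroup_le_of_isPreprimitive_of_isThreeCycle_mem hprim
    (isThreeCycle_commutatorElement_actLeft_actRight a b h₁ h₂ h₁₂)
    (H.mul_mem (H.mul_mem (H.mul_mem (hL _) (hR _)) (H.inv_mem (hL _))) (H.inv_mem (hR _)))

theorem eq_top_of_actLeft_mem_of_actRight_mem [Fintype A] [Finite B] [Nonempty B] [Fintype C]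
    (hA : Odd (Fintype.card A)) (hC : 2 < Fintype.card C) : H = ⊤ := by
  classical
  have := Fintype.ofFinite B
  have : Nonempty A := Fintype.card_pos_iff.mp hA.pos
  obtain ⟨c, c₁, hc⟩ := Fintype.one_lt_card_iff.mp (Nat.lt_of_succ_lt hC)
  obtain ⟨b⟩ := ‹Nonempty B›
  refine eq_top_of_alternatingGroup_le_of_sign_eq_neg_one
    (alternatingGroup_le_of_actLeft_mem_of_actRight_mem hL hR hC)
    (hR (swap (c, b) (c₁, b))) ?_
  rw [sign_actRight, Perm.sign_swap (by simp [hc]), hA.neg_one_pow]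

end Overlap

section Gates

variable {A : Type*} {k m n : ℕ}

theorem applyAlong_comp (f : Perm (Fin m → A)) (ι : Fin m ↪ Fin n) (x : Fin n → A) :
    applyAlong f ι x ∘ ι = f (x ∘ ι) :=
  extWord_comp ι f x

theorem applyAlong_apply_of_notMem_range (f : Perm (Fin m → A)) {ι : Fin m ↪ Fin n}
    (x : Fin n → A) {i : Fin n} (hi : i ∉ Set.range ι) : applyAlong f ι x i = x i :=
  dif_neg hi

theorem applyAlong_apply_eq_of_comp_eq {f : Perm (Fin m → A)} {ι : Fin m ↪ Fin n} {x y : Fin n → A}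
    (hrange : y ∘ ι = f (x ∘ ι)) (hcompl : ∀ i ∉ Set.range ι, y i = x i) :
    applyAlong f ι x = y := by
  funext i
  by_cases hi : i ∈ Set.range ι
  · obtain ⟨j, rfl⟩ := hi
    exact congrFun ((applyAlong_comp f ι x).trans hrange.symm) j
  · rw [applyAlong_apply_of_notMem_range f x hi, hcompl i hi]

theorem applyAlong_refl (f : Perm (Fin n → A)) :
    applyAlong f (Function.Embedding.refl (Fin n)) = f :=
  Equiv.ext fun _ => applyAlong_apply_eq_of_comp_eq rfl fun i hi => absurd ⟨i, rfl⟩ hi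

theorem applyAlong_mul (f g : Perm (Fin m → A)) (ι : Fin m ↪ Fin n) :
    applyAlong (f * g) ι = applyAlong f ι * applyAlong g ι := by
  refine Equiv.ext fun x => applyAlong_apply_eq_of_comp_eq ?_ fun i hi => ?_
  · simp only [Perm.mul_apply, applyAlong_comp]
  · simp only [Perm.mul_apply, applyAlong_apply_of_notMem_range _ _ hi]

theorem applyAlong_applyAlong (f : Perm (Fin k → A)) (ι : Fin k ↪ Fin m) (κ : Fin m ↪ Fin n) :
    applyAlong (applyAlong f ι) κ = applyAlong f (ι.trans κ) := by
  refine Equiv.ext fun x => (applyAlong_apply_eq_of_comp_eq ?_ fun i hi => ?_).symm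
  · change (applyAlong (applyAlong f ι) κ x ∘ κ) ∘ ι = f ((x ∘ κ) ∘ ι)
    rw [applyAlong_comp, applyAlong_comp]
  · by_cases hκ : i ∈ Set.range κ
    · obtain ⟨j, rfl⟩ := hκ
      have hj : j ∉ Set.range ι := fun ⟨l, hl⟩ => hi ⟨l, congrArg κ hl⟩
      exact (congrFun (applyAlong_comp _ κ x) j).trans
        (applyAlong_apply_of_notMem_range f (x ∘ κ) hj)
    · exact applyAlong_apply_of_notMem_range _ x hκ

theorem applyAlong_castSuccEmb_snoc (f : Perm (Fin n → A)) (x : Fin n → A) (b : A) :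
    applyAlong f Fin.castSuccEmb (Fin.snoc x b : Fin (n + 1) → A) = Fin.snoc (f x) b := by
  have snoc_comp (y : Fin n → A) : (Fin.snoc y b : Fin (n + 1) → A) ∘ Fin.castSuccEmb = y :=
    Fin.init_snoc (α := fun _ => A) b y
  refine applyAlong_apply_eq_of_comp_eq (by rw [snoc_comp, snoc_comp]) fun i hi => ?_
  obtain rfl : i = Fin.last n := not_not.mp fun h => hi (Fin.exists_castSucc_eq.mpr h)
  simp only [Fin.snoc_last]

theorem applyAlong_succEmb_cons (f : Perm (Fin n → A)) (x : Fin n → A) (a : A) :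
    applyAlong f (Fin.succEmb n) (Fin.cons a x : Fin (n + 1) → A) = Fin.cons a (f x) := by
  refine applyAlong_apply_eq_of_comp_eq rfl fun i hi => ?_
  obtain rfl : i = 0 := not_not.mp fun h => hi (Fin.exists_succ_eq.mpr h)
  simp only [Fin.cons_zero]

/-- The subgroup of `Perm (Fin n → A)` generated by the gates of arity `m`, applied along arbitrary
injections of coordinates. -/
def gateGroup (A : Type*) (m n : ℕ) : Subgroup (Perm (Fin n → A)) :=
  Subgroup.closure {σ | ∃ (f : Perm (Fin m → A)) (ι : Fin m ↪ Fin n), σ = applyAlong f ι}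

theorem applyAlong_mem_gateGroup (f : Perm (Fin m → A)) (ι : Fin m ↪ Fin n) :
    applyAlong f ι ∈ gateGroup A m n :=
  Subgroup.subset_closure ⟨f, ι, rfl⟩

theorem gateGroup_self (A : Type*) (n : ℕ) : gateGroup A n n = ⊤ :=
  (Subgroup.eq_top_iff' _).mpr fun f => applyAlong_refl f ▸ applyAlong_mem_gateGroup f _

theorem gateGroup_le_comap_applyAlong (κ : Fin m ↪ Fin n) :
    gateGroup A k m ≤
      (gateGroup A k n).comap (MonoidHom.mk' (applyAlong · κ) (applyAlong_mul · · κ)) := by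
  refine (Subgroup.closure_le _).mpr ?_
  rintro _ ⟨f, ι, rfl⟩
  change applyAlong (applyAlong f ι) κ ∈ gateGroup A k n
  exact applyAlong_applyAlong f ι κ ▸ applyAlong_mem_gateGroup f _

theorem gateGroup_le_gateGroup_of_eq_top (h : gateGroup A k m = ⊤) :
    gateGroup A m n ≤ gateGroup A k n := by
  refine (Subgroup.closure_le _).mpr ?_
  rintro _ ⟨f, κ, rfl⟩
  exact gateGroup_le_comap_applyAlong κ (h ▸ Subgroup.mem_top f)

/-- Assembles a word from its first letter, its middle block and its last letter. -/
def joinWord (A : Type*) (k : ℕ) : A × (Fin k → A) × A ≃ (Fin (k + 2) → A) :=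
  ((Equiv.refl A).prodCongr
    ((prodComm (Fin k → A) A).trans (Fin.snocEquiv fun _ : Fin (k + 1) => A))).trans
      (Fin.consEquiv fun _ => A)

theorem joinWord_eq_cons (a : A) (c : Fin k → A) (b : A) :
    joinWord A k (a, c, b) = Fin.cons a (Fin.snoc c b : Fin (k + 1) → A) :=
  rfl

theorem joinWord_eq_snoc (a : A) (c : Fin k → A) (b : A) :
    joinWord A k (a, c, b) = Fin.snoc (Fin.cons a c : Fin (k + 1) → A) b :=
  Fin.cons_snoc_eq_snoc_cons (β := A) a c b

theorem permCongr_joinWord_actLeft (f : Perm (A × (Fin k → A))) :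
    (joinWord A k).permCongr (actLeft A f) =
      applyAlong ((Fin.consEquiv fun _ => A).permCongr f) Fin.castSuccEmb := by
  ext1 x
  obtain ⟨⟨a, c, b⟩, rfl⟩ := (joinWord A k).surjective x
  rw [permCongr_apply, symm_apply_apply, actLeft_apply, joinWord_eq_snoc, joinWord_eq_snoc,
    applyAlong_castSuccEmb_snoc]
  rfl

theorem permCongr_joinWord_actRight (g : Perm ((Fin k → A) × A)) :
    (joinWord A k).permCongr (actRight A g) =
      applyAlong (((prodComm _ _).trans (Fin.snocEquiv fun _ => A)).permCongr g)
        (Fin.succEmb (k + 1)) := by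
  ext1 x
  obtain ⟨⟨a, c, b⟩, rfl⟩ := (joinWord A k).surjective x
  rw [permCongr_apply, symm_apply_apply, actRight_apply, joinWord_eq_cons, joinWord_eq_cons,
    applyAlong_succEmb_cons]
  simp [Fin.snocEquiv]

theorem gateGroup_succ_eq_top_of_odd_card [Fintype A] (hA : Odd (Fintype.card A)) (hn : 2 ≤ n) :
    gateGroup A n (n + 1) = ⊤ := by
  obtain ⟨k, rfl⟩ := Nat.exists_eq_add_of_le' (Nat.le_of_succ_le hn)
  rcases subsingleton_or_nontrivial A with _ | _
  · exact Subsingleton.elim _ _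
  have hA₃ : 3 ≤ Fintype.card A := by
    have := Fintype.one_lt_card (α := A)
    grind
  have hblock : 2 < Fintype.card (Fin k → A) := by
    rw [Fintype.card_fun, Fintype.card_fin]
    exact hA₃.trans (Nat.le_self_pow (by omega) _)
  let e := (joinWord A k).permCongrHom
  have hleft (f) : actLeft A f ∈ (gateGroup A (k + 1) (k + 2)).comap e.toMonoidHom := by
    change (joinWord A k).permCongr (actLeft A f) ∈ gateGroup A (k + 1) (k + 2)
    exact permCongr_joinWord_actLeft f ▸ applyAlong_mem_gateGroup _ _
  have hright (g) : actRight A g ∈ (gateGroup A (k + 1) (k + 2)).comap e.toMonoidHom := by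
    change (joinWord A k).permCongr (actRight A g) ∈ gateGroup A (k + 1) (k + 2)
    exact permCongr_joinWord_actRight g ▸ applyAlong_mem_gateGroup _ _
  have hcomap := eq_top_of_actLeft_mem_of_actRight_mem hleft hright hA hblock
  exact Subgroup.comap_injective e.surjective (hcomap.trans (Subgroup.comap_top _).symm)

end Gates

theorem fourAry_gates_generate_top_of_odd_card_general {A : Type*} [Fintype A]
    (hA : Odd (Fintype.card A)) {m n : ℕ} (hm : 2 ≤ m) (hmn : m ≤ n) : gateGroup A m n = ⊤ := by
  induction n, hmn using Nat.le_induction with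
  | base => exact gateGroup_self A m
  | succ n hmn ih =>
    rw [eq_top_iff, ← gateGroup_succ_eq_top_of_odd_card hA (hm.trans hmn)]
    exact gateGroup_le_gateGroup_of_eq_top ih

/-- **For odd alphabets, 4-ary gates generate everything** (Corollary 11 of the paper).
Let `A` be a finite type of odd cardinality and `n ≥ 4`.  Then the full symmetric group
of `Fin n → A` equals the subgroup of `Perm (Fin n → A)` generated by the applications,
along injections `ι : Fin 4 ↪ Fin n`, of arbitrary permutations of `Fin 4 → A`. -/
theorem fourAry_gates_generate_top_of_odd_card
    {A : Type*} [Fintype A] [DecidableEq A] (hA : Odd (Fintype.card A))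
    (n : ℕ) (hn : 4 ≤ n) :
    Subgroup.closure
        {σ : Equiv.Perm (Fin n → A) |
          ∃ (f : Equiv.Perm (Fin 4 → A)) (ι : Fin 4 ↪ Fin n),
            σ = applyAlong f ι} = ⊤ :=
  fourAry_gates_generate_top_of_odd_card_general hA (by norm_num) hn
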